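/- Let α ∈ (0,1). There is a constant c > 0 depending only on α such that for every n ≥ 2, every r > 0, every Borel subset A of ℝ^n, and every C > 0 with ν_α^n(A) > 1/C, one has ν_α^n( x ∉ A + C (log n)^{1/α − 1}( √r B_{ℓ^2} + r B_{ℓ^1} ) + r^{1/α} B_{ℓ^α} ) ≤ e^{−c r} / ( ν_α^n(A) − 1/C ). -/

import Mathlib

open MeasureTheory Filter Topology Pointwise

noncomputable section

/-- The (unnormalized) measure on `ℝ` with density `exp (-|x|^α)`. -/
def nuKernel (α : ℝ) : Measure ℝ :=
  volume.withDensity fun x => ENNReal.ofReal (Real.exp (-|x| ^ α))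

/-- The probability measure `ν_α` on `ℝ`. -/
def nuAlpha (α : ℝ) : Measure ℝ := (nuKernel α Set.univ)⁻¹ • nuKernel α

/-- The `n`-fold product measure `ν_α^n` on `ℝ^n`. -/
def nuPi (α : ℝ) (n : ℕ) : Measure (Fin n → ℝ) := Measure.pi fun _ => nuAlpha α

/-- `‖h‖_{ℓ^p} = (∑ |h i|^p)^(1/p)`. -/
def lpNorm (p : ℝ) {n : ℕ} (h : Fin n → ℝ) : ℝ := (∑ i, |h i| ^ p) ^ (1 / p)

/-- The unit ball of `ℓ^p` in `ℝ^n`. -/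
def lpBall (p : ℝ) (n : ℕ) : Set (Fin n → ℝ) := {h | lpNorm p h ≤ 1}

open scoped ENNReal NNReal

theorem IsCompact.volume_add_le_of_add_subset {K L C : Set ℝ} (hK : IsCompact K) (hL : IsCompact L)
    (hK' : K.Nonempty) (hL' : L.Nonempty) (h : K + L ⊆ C) :
    volume K + volume L ≤ volume C := by
  obtain ⟨a, haK, ha⟩ := hK.exists_isGreatest hK'
  obtain ⟨b, hbL, hb⟩ := hL.exists_isLeast hL'
  have hdisj : AEDisjoint volume (b +ᵥ K) (a +ᵥ L) := by
    refine measure_mono_null (t := {a + b}) ?_ (by simp)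
    rintro x ⟨⟨k, hk, rfl⟩, ⟨l, hl, hx⟩⟩
    have := ha hk
    have := hb hl
    simp only [vadd_eq_add, Set.mem_singleton_iff] at hx ⊢
    linarith
  calc volume K + volume L = volume (b +ᵥ K) + volume (a +ᵥ L) := by simp
    _ = volume ((b +ᵥ K) ∪ (a +ᵥ L)) :=
      (measure_union₀ ((hL.measurableSet.const_vadd a).nullMeasurableSet) hdisj).symm
    _ ≤ volume C := by
      refine measure_mono (Set.union_subset ?_ ?_)
      · rintro _ ⟨k, hk, rfl⟩
        exact h ⟨k, hk, b, hbL, add_comm _ _⟩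
      · rintro _ ⟨l, hl, rfl⟩
        exact h ⟨a, haK, l, hl, rfl⟩

/-- The one-dimensional Brunn–Minkowski inequality. -/
theorem volume_add_le_of_add_subset {A B C : Set ℝ} (hA : MeasurableSet A) (hB : MeasurableSet B)
    (hA' : A.Nonempty) (hB' : B.Nonempty) (h : A + B ⊆ C) :
    volume A + volume B ≤ volume C := by
  obtain ⟨a, ha⟩ := hA'
  obtain ⟨b, hb⟩ := hB'
  rw [hA.measure_eq_iSup_isCompact, hB.measure_eq_iSup_isCompact]
  simp_rw [iSup_and']
  refine ENNReal.biSup_add_biSup_le' ⟨∅, by simp⟩ ⟨∅, by simp⟩ fun K hK L hL => ?_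
  refine le_trans (add_le_add (measure_mono (Set.subset_insert a K))
    (measure_mono (Set.subset_insert b L))) ?_
  refine IsCompact.volume_add_le_of_add_subset (hK.2.insert a) (hL.2.insert b)
    (Set.insert_nonempty _ _) (Set.insert_nonempty _ _) (Set.Subset.trans ?_ h)
  exact Set.add_subset_add (Set.insert_subset ha hK.1) (Set.insert_subset hb hL.1)

/-- The additive form of the Prékopa–Leindler inequality on the line, for normalized functions. -/
theorem lintegral_add_lintegral_le_of_mul_le_sq {f g h : ℝ → ℝ} (hf : Measurable f)
    (hg : Measurable g) (hh : Measurable h) (hf0 : ∀ x, 0 ≤ f x) (hg0 : ∀ x, 0 ≤ g x)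
    (hh0 : ∀ x, 0 ≤ h x) (hf1 : IsLUB (Set.range f) 1) (hg1 : IsLUB (Set.range g) 1)
    (hfg : ∀ s t, f s * g t ≤ h (s + t) ^ 2) :
    (∫⁻ x, ENNReal.ofReal (f x)) + ∫⁻ x, ENNReal.ofReal (g x) ≤ ∫⁻ x, ENNReal.ofReal (h x) := by
  have hmeas : Measurable fun u : ℝ => volume {a | u < f a} :=
    Antitone.measurable fun u v huv => measure_mono fun x hx => lt_of_le_of_lt huv hx
  rw [lintegral_eq_lintegral_meas_lt _ (ae_of_all _ hf0) hf.aemeasurable,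
    lintegral_eq_lintegral_meas_lt _ (ae_of_all _ hg0) hg.aemeasurable,
    lintegral_eq_lintegral_meas_lt _ (ae_of_all _ hh0) hh.aemeasurable,
    ← lintegral_add_left hmeas]
  refine setLIntegral_mono' measurableSet_Ioi fun u (hu : 0 < u) => ?_
  rcases lt_or_ge u 1 with hu1 | hu1
  · obtain ⟨_, ⟨a, rfl⟩, ha⟩ := (lt_isLUB_iff hf1).1 hu1
    obtain ⟨_, ⟨b, rfl⟩, hb⟩ := (lt_isLUB_iff hg1).1 hu1
    refine volume_add_le_of_add_subset (measurableSet_lt measurable_const hf)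
      (measurableSet_lt measurable_const hg) ⟨a, ha⟩ ⟨b, hb⟩ ?_
    rintro _ ⟨s, hs, t, ht, rfl⟩
    simp only [Set.mem_ofPred_eq] at hs ht ⊢
    have := hfg s t
    refine lt_of_pow_lt_pow_left₀ 2 (hh0 _) ?_
    nlinarith
  · have h1 : {a | u < f a} = ∅ := by
      ext x
      have := hf1.1 ⟨x, rfl⟩
      simp; linarith
    have h2 : {a | u < g a} = ∅ := by
      ext x
      have := hg1.1 ⟨x, rfl⟩
      simp; linarith
    simp [h1, h2]

theorem ENNReal.four_mul_mul_le_add_sq (a b : ℝ≥0∞) : 4 * (a * b) ≤ (a + b) ^ 2 := by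
  rcases eq_or_ne a ⊤ with rfl | ha
  · simp
  rcases eq_or_ne b ⊤ with rfl | hb
  · simp
  lift a to ℝ≥0 using ha
  lift b to ℝ≥0 using hb
  norm_cast
  rw [← NNReal.coe_le_coe]
  push_cast
  nlinarith [sq_nonneg ((a : ℝ) - b)]

/-- The one-dimensional Prékopa–Leindler inequality at the midpoint, in the scaling `h (s + t)`. -/
theorem four_mul_lintegral_mul_lintegral_le_sq {f g h : ℝ → ℝ} (hf : Measurable f)
    (hg : Measurable g) (hh : Measurable h) (hf0 : ∀ x, 0 ≤ f x) (hg0 : ∀ x, 0 ≤ g x)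
    (hh0 : ∀ x, 0 ≤ h x) (hfb : BddAbove (Set.range f)) (hgb : BddAbove (Set.range g))
    (hfg : ∀ s t, f s * g t ≤ h (s + t) ^ 2) :
    4 * ((∫⁻ x, ENNReal.ofReal (f x)) * ∫⁻ x, ENNReal.ofReal (g x)) ≤
      (∫⁻ x, ENNReal.ofReal (h x)) ^ 2 := by
  have key : ∀ {f : ℝ → ℝ}, (∀ x, 0 ≤ f x) → BddAbove (Set.range f) →
      (∀ x, f x = 0) ∨ ∃ a > 0, IsLUB (Set.range fun x => f x / a) 1 := by
    intro f hf0 hfb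
    rcases eq_or_ne (⨆ x, f x) 0 with h0 | h0
    · exact Or.inl fun x => le_antisymm (h0 ▸ le_ciSup hfb x) (hf0 x)
    · have hpos : 0 < ⨆ x, f x := lt_of_le_of_ne (Real.iSup_nonneg hf0) h0.symm
      refine Or.inr ⟨⨆ x, f x, hpos, ?_⟩
      refine ⟨?_, fun b hb => ?_⟩
      · rintro _ ⟨x, rfl⟩
        exact (div_le_one hpos).2 (le_ciSup hfb x)
      · have : (⨆ x, f x) ≤ b * ⨆ x, f x :=
          ciSup_le fun x => (div_le_iff₀ hpos).1 (hb ⟨x, rfl⟩)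
        exact le_of_mul_le_mul_right (by simpa using this) hpos
  rcases key hf0 hfb with h0 | ⟨a, ha, hfa⟩
  · simp [h0]
  rcases key hg0 hgb with h0 | ⟨b, hb, hgb⟩
  · simp [h0]
  have hab : 0 < √(a * b) := by positivity
  have H := lintegral_add_lintegral_le_of_mul_le_sq (hf.div_const a) (hg.div_const b)
    (hh.div_const √(a * b)) (fun x => div_nonneg (hf0 x) ha.le) (fun x => div_nonneg (hg0 x) hb.le)
    (fun x => div_nonneg (hh0 x) hab.le) hfa hgb (fun s t => by
      rw [div_pow, Real.sq_sqrt (by positivity), div_mul_div_comm]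
      gcongr
      exact hfg s t)
  have hscale : ∀ (c : ℝ) (hc : 0 < c) (k : ℝ → ℝ), Measurable k →
      ∫⁻ x, ENNReal.ofReal (k x / c) = (∫⁻ x, ENNReal.ofReal (k x)) / ENNReal.ofReal c := by
    intro c hc k hk
    simp_rw [ENNReal.ofReal_div_of_pos hc, div_eq_mul_inv]
    rw [lintegral_mul_const _ hk.ennreal_ofReal]
  rw [hscale a ha f hf, hscale b hb g hg, hscale _ hab h hh] at H
  have H2 := (ENNReal.four_mul_mul_le_add_sq _ _).trans (pow_le_pow_left' H 2)
  have hc : ENNReal.ofReal √(a * b) ^ 2 = ENNReal.ofReal a * ENNReal.ofReal b := by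
    rw [← ENNReal.ofReal_pow hab.le, Real.sq_sqrt (by positivity), ENNReal.ofReal_mul ha.le]
  have hA0 : ENNReal.ofReal a ≠ 0 := by simpa using ha
  have hB0 : ENNReal.ofReal b ≠ 0 := by simpa using hb
  rw [div_eq_mul_inv (∫⁻ x, ENNReal.ofReal (h x)), mul_pow, ← ENNReal.inv_pow, hc,
    ← div_eq_mul_inv, ENNReal.le_div_iff_mul_le (by simp [hA0, hB0]) (by simp [ENNReal.mul_eq_top])] at H2
  refine le_trans (le_of_eq ?_) H2
  conv_lhs => rw [← ENNReal.div_mul_cancel hA0 ENNReal.ofReal_ne_top (b := ∫⁻ x, ENNReal.ofReal (f x)),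
    ← ENNReal.div_mul_cancel hB0 ENNReal.ofReal_ne_top (b := ∫⁻ x, ENNReal.ofReal (g x))]
  ring

theorem lintegral_indicator_half_sin_half :
    ∫⁻ z, ENNReal.ofReal ((Set.Ioc 0 (2 * Real.pi)).indicator (fun z => Real.sin (z / 2) / 2) z)
      = 2 := by
  have hpi := Real.pi_pos
  have hint : ∫ z in (0 : ℝ)..(2 * Real.pi), Real.sin (z / 2) / 2 = 2 := by
    rw [intervalIntegral.integral_div, intervalIntegral.integral_comp_div _ two_ne_zero]
    simp
    norm_num
  rw [← ofReal_integral_eq_lintegral_ofReal, integral_indicator measurableSet_Ioc,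
    ← intervalIntegral.integral_of_le (by positivity), hint]
  · simp
  · rw [integrable_indicator_iff measurableSet_Ioc]
    exact (Continuous.integrableOn_Icc (by fun_prop)).mono_set Set.Ioc_subset_Icc_self
  · refine ae_of_all _ fun z => Set.indicator_nonneg (fun z hz => ?_) z
    exact div_nonneg (Real.sin_nonneg_of_nonneg_of_le_pi (by linarith [hz.1])
      (by linarith [hz.2])) zero_le_two

/-- The logit function. -/
def logit (u : ℝ) : ℝ := Real.log u - Real.log (1 - u)

theorem sin_sq_half_add_arccos {u w : ℝ} (hu0 : 0 < u) (hu1 : u < 1) (hw0 : 0 < w) (hw1 : w < 1) :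
    Real.sin ((Real.arccos (1 - 2 * u) + Real.arccos (1 - 2 * w)) / 2) ^ 2 =
      Real.cosh ((logit u - logit w) / 4) ^ 2 *
        (Real.sin (Real.arccos (1 - 2 * u)) * Real.sin (Real.arccos (1 - 2 * w))) := by
  have half : ∀ v : ℝ, 0 < v → v < 1 → Real.sin (Real.arccos (1 - 2 * v) / 2) = √v ∧
      Real.cos (Real.arccos (1 - 2 * v) / 2) = √(1 - v) := by
    intro v hv0 hv1
    have h0 := Real.arccos_nonneg (1 - 2 * v)
    have h1 := Real.arccos_le_pi (1 - 2 * v)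
    rw [Real.sin_half_eq_sqrt h0 (by linarith [Real.pi_pos]),
      Real.cos_half (by linarith [Real.pi_pos]) h1,
      Real.cos_arccos (by linarith) (by linarith)]
    constructor <;> congr 1 <;> ring
  obtain ⟨hsu, hcu⟩ := half u hu0 hu1
  obtain ⟨hsw, hcw⟩ := half w hw0 hw1
  have dbl : ∀ v : ℝ, 0 < v → v < 1 → Real.sin (Real.arccos (1 - 2 * v)) = 2 * √v * √(1 - v) := by
    intro v hv0 hv1
    obtain ⟨h1, h2⟩ := half v hv0 hv1
    rw [← h1, ← h2, ← Real.sin_two_mul]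
    congr 1; ring
  have hexp : ∀ v : ℝ, 0 < v → v < 1 → Real.exp (logit v / 2) = √v / √(1 - v) := by
    intro v hv0 hv1
    rw [logit, sub_div, Real.exp_sub, Real.exp_half, Real.exp_half, Real.exp_log hv0,
      Real.exp_log (by linarith)]
  have hp := Real.sqrt_pos.2 hu0
  have hq := Real.sqrt_pos.2 (sub_pos.2 hu1)
  have hp' := Real.sqrt_pos.2 hw0
  have hq' := Real.sqrt_pos.2 (sub_pos.2 hw1)
  have hcosh : Real.cosh ((logit u - logit w) / 4) ^ 2 =
      1 / 2 + (√u / √(1 - u) / (√w / √(1 - w)) + √w / √(1 - w) / (√u / √(1 - u))) / 4 := by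
    rw [← hexp u hu0 hu1, ← hexp w hw0 hw1, ← Real.exp_sub, ← Real.exp_sub, Real.cosh_eq, div_pow,
      add_sq, ← Real.exp_nat_mul, ← Real.exp_nat_mul, mul_assoc, ← Real.exp_add]
    push_cast
    rw [show (2 : ℝ) * ((logit u - logit w) / 4) = logit u / 2 - logit w / 2 by ring,
      show (2 : ℝ) * -((logit u - logit w) / 4) = logit w / 2 - logit u / 2 by ring]
    simp
    ring
  rw [add_div, Real.sin_add, hsu, hcu, hsw, hcw, dbl u hu0 hu1, dbl w hw0 hw1, hcosh]
  field_simp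
  ring

/-- Infimum-convolution inequality for a probability density `ρ` with distribution function `U`,
whose cost is expressed through `logit ∘ U`. -/
theorem lintegral_mul_lintegral_le_one_of_le_cosh_sq {U ρ : ℝ → ℝ}
    (hU : ∀ x, HasDerivAt U (ρ x) x) (hρ : ∀ x, 0 < ρ x) (hρm : Measurable ρ)
    (hU0 : ∀ x, 0 < U x) (hU1 : ∀ x, U x < 1) {F G : ℝ → ℝ≥0∞} (hF : Measurable F)
    (hG : Measurable G) {N : ℝ≥0} (hFN : ∀ x, F x ≤ N) (hGN : ∀ x, G x ≤ N)
    (hFG : ∀ x y, F x * G y ≤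
      ENNReal.ofReal (Real.cosh ((logit (U x) - logit (U y)) / 4) ^ 2)) :
    (∫⁻ x, F x ∂volume.withDensity fun x => ENNReal.ofReal (ρ x)) *
      (∫⁻ x, G x ∂volume.withDensity fun x => ENNReal.ofReal (ρ x)) ≤ 1 := by
  set S : ℝ → ℝ := fun x => Real.arccos (1 - 2 * U x) with hS
  have hmono : StrictMono U := strictMono_of_hasDerivAt_pos hU hρ
  have hSinj : Function.Injective S := by
    intro x y hxy
    have := congrArg Real.cos hxy
    simp only [hS] at this
    rw [Real.cos_arccos (by linarith [hU1 x]) (by linarith [hU0 x]),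
      Real.cos_arccos (by linarith [hU1 y]) (by linarith [hU0 y])] at this
    exact hmono.injective (by linarith)
  have hsin : ∀ x, 0 < Real.sin (S x) := by
    intro x
    rw [hS, Real.sin_arccos, Real.sqrt_pos]
    nlinarith [hU0 x, hU1 x]
  have hS0 : ∀ x, 0 < S x := fun x => Real.arccos_pos.2 (by linarith [hU0 x])
  have hSpi : ∀ x, S x ≤ Real.pi := fun x => Real.arccos_le_pi _
  have hSd : ∀ x, HasDerivAt S (2 * ρ x / Real.sin (S x)) x := by
    intro x
    have h1 : HasDerivAt (fun x => 1 - 2 * U x) (-(2 * ρ x)) x := ((hU x).const_mul 2).const_sub 1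
    have h2 := (Real.hasDerivAt_arccos (x := 1 - 2 * U x) (by linarith [hU1 x])
      (by linarith [hU0 x])).comp x h1
    refine h2.congr_deriv ?_
    rw [hS, Real.sin_arccos]
    ring
  have hSm : Measurable S := (continuous_iff_continuousAt.2 fun x => (hSd x).continuousAt).measurable
  have hemb : MeasurableEmbedding S := hSm.measurableEmbedding hSinj
  let L : (ℝ → ℝ≥0∞) → ℝ → ℝ := fun F => Function.extend S
    (fun x => (F x).toReal * Real.sin (S x) / 2) 0
  have hL : ∀ F x, L F (S x) = (F x).toReal * Real.sin (S x) / 2 := fun F x =>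
    hSinj.extend_apply _ _ _
  have hL' : ∀ F s, (¬∃ x, S x = s) → L F s = 0 := fun F s hs => Function.extend_apply' _ _ _ hs
  have hLm : ∀ F, Measurable F → Measurable (L F) := fun F hF =>
    hemb.measurable_extend (by fun_prop) measurable_const
  have hL0 : ∀ F s, 0 ≤ L F s := by
    intro F s
    by_cases hs : ∃ x, S x = s
    · obtain ⟨x, rfl⟩ := hs
      rw [hL]
      have := hsin x
      positivity
    · rw [hL' F s hs]
  have hLb : ∀ F : ℝ → ℝ≥0∞, (∀ x, F x ≤ N) → BddAbove (Set.range (L F)) := by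
    rintro F hF
    refine ⟨N, ?_⟩
    rintro _ ⟨s, rfl⟩
    by_cases hs : ∃ x, S x = s
    · obtain ⟨x, rfl⟩ := hs
      rw [hL]
      have h1 : (F x).toReal ≤ N := ENNReal.toReal_le_coe_of_le_coe (hF x)
      have := Real.sin_le_one (S x)
      have h2 : (F x).toReal * Real.sin (S x) ≤ N * 1 :=
        mul_le_mul h1 this (hsin x).le N.coe_nonneg
      have h3 : (0 : ℝ) ≤ (F x).toReal := ENNReal.toReal_nonneg
      linarith [N.coe_nonneg]
    · rw [hL' F s hs]
      exact N.coe_nonneg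
  have hint : ∀ F : ℝ → ℝ≥0∞, Measurable F → (∀ x, F x ≤ N) →
      ∫⁻ x, F x ∂(volume.withDensity fun x => ENNReal.ofReal (ρ x)) ≤
        ∫⁻ s, ENNReal.ofReal (L F s) := by
    intro F hF hFN
    rw [lintegral_withDensity_eq_lintegral_mul _ hρm.ennreal_ofReal hF]
    calc _ = ∫⁻ x in Set.univ, ENNReal.ofReal |2 * ρ x / Real.sin (S x)| *
            ENNReal.ofReal (L F (S x)) := by
          rw [setLIntegral_univ]
          refine lintegral_congr fun x => ?_
          have hx := hsin x
          have hρx := hρ x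
          have hFt : F x ≠ ⊤ := ne_top_of_le_ne_top ENNReal.coe_ne_top (hFN x)
          rw [hL, ← ENNReal.ofReal_mul (abs_nonneg _), abs_of_pos (by positivity)]
          rw [show 2 * ρ x / Real.sin (S x) * ((F x).toReal * Real.sin (S x) / 2) =
            ρ x * (F x).toReal by field_simp, ENNReal.ofReal_mul hρx.le, ENNReal.ofReal_toReal hFt]
          rfl
      _ = ∫⁻ s in S '' Set.univ, ENNReal.ofReal (L F s) :=
          (lintegral_image_eq_lintegral_abs_deriv_mul MeasurableSet.univ
            (fun x _ => (hSd x).hasDerivWithinAt) hSinj.injOn (fun s => ENNReal.ofReal (L F s))).symm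
      _ ≤ _ := setLIntegral_le_lintegral _ _
  have hH0 : ∀ z, 0 ≤ (Set.Ioc 0 (2 * Real.pi)).indicator (fun z => Real.sin (z / 2) / 2) z :=
    Set.indicator_nonneg fun z hz => div_nonneg (Real.sin_nonneg_of_nonneg_of_le_pi
      (by linarith [hz.1]) (by linarith [hz.2])) zero_le_two
  have hPL := four_mul_lintegral_mul_lintegral_le_sq (hLm F hF) (hLm G hG)
    (h := (Set.Ioc 0 (2 * Real.pi)).indicator (fun z => Real.sin (z / 2) / 2))
    (Measurable.indicator (by fun_prop) measurableSet_Ioc) (hL0 F) (hL0 G) hH0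
    (hLb F hFN) (hLb G hGN) (by
      intro s t
      by_cases hs : ∃ x, S x = s
      swap
      · rw [hL' F s hs, zero_mul]; positivity
      by_cases ht : ∃ y, S y = t
      swap
      · rw [hL' G t ht, mul_zero]; positivity
      obtain ⟨x, rfl⟩ := hs
      obtain ⟨y, rfl⟩ := ht
      have hmem : S x + S y ∈ Set.Ioc 0 (2 * Real.pi) :=
        ⟨by linarith [hS0 x, hS0 y], by linarith [hSpi x, hSpi y]⟩
      rw [hL, hL, Set.indicator_of_mem hmem,
        div_pow, sin_sq_half_add_arccos (hU0 x) (hU1 x) (hU0 y) (hU1 y)]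
      have h1 : (F x).toReal * (G y).toReal ≤
          Real.cosh ((logit (U x) - logit (U y)) / 4) ^ 2 := by
        rw [← ENNReal.toReal_mul]
        exact ENNReal.toReal_le_of_le_ofReal (by positivity) (hFG x y)
      have h2 := mul_le_mul_of_nonneg_right h1 (mul_pos (hsin x) (hsin y)).le
      simp only [hS] at h2 ⊢
      linarith)
  rw [lintegral_indicator_half_sin_half] at hPL
  have h4 : (4 : ℝ≥0∞) * ((∫⁻ s, ENNReal.ofReal (L F s)) * ∫⁻ s, ENNReal.ofReal (L G s)) ≤ 4 * 1 :=
    hPL.trans (by norm_num)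
  refine (mul_le_mul' (hint F hF hFN) (hint G hG hGN)).trans ?_
  exact (ENNReal.mul_le_mul_iff_right (by norm_num) (by norm_num)).1 h4

/-- Infimum-convolution (property `τ`) for the measure `μ` and the cost `w`. -/
def InfConvProperty {X : Type*} [MeasurableSpace X] (μ : Measure X) (w : X → X → ℝ) : Prop :=
  ∀ (F G : X → ℝ≥0∞) (N : ℝ≥0), Measurable F → Measurable G → (∀ x, F x ≤ N) → (∀ x, G x ≤ N) →
    (∀ x y, F x * G y ≤ ENNReal.ofReal (Real.exp (w x y))) → (∫⁻ x, F x ∂μ) * ∫⁻ x, G x ∂μ ≤ 1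

theorem piFinSuccAbove_zero_symm_apply {X : Type*} [MeasurableSpace X] {n : ℕ}
    (p : X × (Fin n → X)) :
    (MeasurableEquiv.piFinSuccAbove (fun _ : Fin (n + 1) => X) 0).symm p = Fin.cons p.1 p.2 := by
  simp only [MeasurableEquiv.piFinSuccAbove]
  simp
  rfl

theorem lintegral_pi_fin_succ {X : Type*} [MeasurableSpace X] (μ : Measure X) [SigmaFinite μ]
    {n : ℕ} {F : (Fin (n + 1) → X) → ℝ≥0∞} (hF : Measurable F) :
    ∫⁻ x, F x ∂(Measure.pi fun _ => μ) =
      ∫⁻ a, ∫⁻ v, F (Fin.cons a v : Fin (n + 1) → X) ∂(Measure.pi fun _ => μ) ∂μ := by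
  have h := (measurePreserving_piFinSuccAbove (fun _ : Fin (n + 1) => μ) 0).symm
  have hm := (hF.comp h.measurable).aemeasurable
    (μ := μ.prod (Measure.pi fun _ : Fin n => μ))
  rw [← h.lintegral_comp hF]
  refine (lintegral_prod _ hm).trans ?_
  simp only [Function.comp_apply, piFinSuccAbove_zero_symm_apply]

theorem InfConvProperty.pi {X : Type*} [MeasurableSpace X] {μ : Measure X} [IsProbabilityMeasure μ]
    {w : X → X → ℝ} (hμ : InfConvProperty μ w) (n : ℕ) :
    InfConvProperty (Measure.pi fun _ : Fin n => μ) fun x y => ∑ i, w (x i) (y i) := by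
  induction n with
  | zero =>
    intro F G N hF hG hFN hGN hFG
    have hc : ∀ H : (Fin 0 → X) → ℝ≥0∞, ∫⁻ x, H x ∂(Measure.pi fun _ => μ) = H default := by
      intro H
      rw [lintegral_congr fun x => congrArg H (Subsingleton.elim x default), lintegral_const]
      simp
    rw [hc, hc]
    simpa using hFG default default
  | succ n ih =>
    intro F G N hF hG hFN hGN hFG
    rw [lintegral_pi_fin_succ μ hF, lintegral_pi_fin_succ μ hG]
    have hcons : Measurable fun p : X × (Fin n → X) => (Fin.cons p.1 p.2 : Fin (n + 1) → X) :=
      (funext fun p => piFinSuccAbove_zero_symm_apply (X := X) (n := n) p) ▸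
        (MeasurableEquiv.piFinSuccAbove (fun _ : Fin (n + 1) => X) 0).symm.measurable
    have hFc := hF.comp hcons
    have hGc := hG.comp hcons
    have hbound : ∀ H : (Fin (n + 1) → X) → ℝ≥0∞, (∀ x, H x ≤ N) → ∀ a,
        ∫⁻ v, H (Fin.cons a v : Fin (n + 1) → X) ∂(Measure.pi fun _ => μ) ≤ N := by
      intro H hH a
      refine (lintegral_mono fun v => hH _).trans ?_
      simp
    refine hμ _ _ N hFc.lintegral_prod_right' hGc.lintegral_prod_right' (hbound F hFN)
      (hbound G hGN) fun a b => ?_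
    set e := ENNReal.ofReal (Real.exp (w a b)) with he
    have he0 : e ≠ 0 := by simp [he, Real.exp_pos]
    have het : e ≠ ⊤ := ENNReal.ofReal_ne_top
    have he' : e⁻¹ = ENNReal.ofReal (Real.exp (-w a b)) := by
      rw [he, Real.exp_neg, ENNReal.ofReal_inv_of_pos (Real.exp_pos _)]
    have hFa : Measurable fun v => F (Fin.cons a v : Fin (n + 1) → X) :=
      hFc.comp measurable_prodMk_left
    have hGb : Measurable fun v => G (Fin.cons b v : Fin (n + 1) → X) :=
      hGc.comp measurable_prodMk_left
    have hN : (N : ℝ≥0∞) ≤ (max N (e⁻¹.toNNReal * N) : ℝ≥0) := by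
      exact_mod_cast le_max_left _ _
    have hN' : e⁻¹ * N ≤ (max N (e⁻¹.toNNReal * N) : ℝ≥0) := by
      rw [← ENNReal.coe_toNNReal (ENNReal.inv_ne_top.2 he0)]
      exact_mod_cast le_max_right _ _
    have key := ih (fun v => e⁻¹ * F (Fin.cons a v : Fin (n + 1) → X)) (fun v => G (Fin.cons b v : Fin (n + 1) → X))
      (max N (e⁻¹.toNNReal * N)) (hFa.const_mul _) hGb
      (fun v => (mul_le_mul_right (hFN _) _).trans hN') (fun v => (hGN _).trans hN)
      (fun x y => by
        have h1 := hFG (Fin.cons a x) (Fin.cons b y)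
        simp only [Fin.sum_univ_succ, Fin.cons_zero, Fin.cons_succ] at h1
        rw [mul_assoc]
        refine (mul_le_mul_right h1 _).trans (le_of_eq ?_)
        rw [he', ← ENNReal.ofReal_mul (Real.exp_pos _).le, ← Real.exp_add]
        congr 2
        ring)
    rw [lintegral_const_mul _ hFa, mul_assoc] at key
    have := (ENNReal.inv_mul_le_iff he0 het).1 key
    simpa using this

theorem exp_min_sq_abs_le_cosh_sq (d : ℝ) :
    Real.exp (min (d ^ 2) |d| / 32) ≤ Real.cosh (d / 4) ^ 2 := by
  wlog hd : 0 ≤ d generalizing d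
  · have := this (-d) (by linarith)
    rwa [neg_sq, abs_neg, neg_div, Real.cosh_neg] at this
  rw [abs_of_nonneg hd]
  have hcosh : Real.cosh (d / 4) ^ 2 = 1 / 2 + Real.cosh (d / 2) / 2 := by
    rw [show d / 2 = 2 * (d / 4) by ring, Real.cosh_two_mul, Real.sinh_sq]
    ring
  rcases le_total d 4 with h4 | h4
  · refine (Real.exp_le_exp.2 (div_le_div_of_nonneg_right (min_le_left _ _) (by norm_num))).trans ?_
    have h1 : 1 + (d / 2) ^ 2 / 2 ≤ Real.cosh (d / 2) := by
      have := Real.cosh_sq' (d / 4)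
      have h2 : d / 4 ≤ Real.sinh (d / 4) := Real.self_le_sinh_iff.2 (by linarith)
      nlinarith
    have h3 : Real.exp (d ^ 2 / 32) ≤ 1 + d ^ 2 / 16 := by
      have h := Real.exp_bound' (x := d ^ 2 / 32) (by positivity) (by nlinarith) (n := 1) one_pos
      simp at h
      linarith
    rw [hcosh]; nlinarith
  · refine (Real.exp_le_exp.2 (div_le_div_of_nonneg_right (min_le_right _ _) (by norm_num))).trans ?_
    have h1 : Real.exp (d / 2) / 2 ≤ Real.cosh (d / 2) := by
      rw [Real.cosh_eq]; linarith [Real.exp_pos (-(d / 2))]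
    have h2 : Real.exp (d / 2) = Real.exp (d / 32) * Real.exp (15 * d / 32) := by
      rw [← Real.exp_add]; congr 1; ring
    have h3 : 4 ≤ Real.exp (15 * d / 32) := by
      have h5 : (2.7182818283 : ℝ) < Real.exp 1 := Real.exp_one_gt_d9
      have h6 : Real.exp (15 * d / 32) ≥ Real.exp (1 + 7 / 8) := Real.exp_le_exp.2 (by linarith)
      rw [Real.exp_add] at h6
      have h7 := Real.add_one_le_exp (7 / 8 : ℝ)
      nlinarith [Real.exp_pos 1]
    rw [hcosh]
    nlinarith [Real.exp_pos (d / 32)]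

/-- Property `τ` of a density on the line, with a cost that is quadratic for small and linear for
large increments of `logit ∘ U`. -/
theorem infConvProperty_withDensity {U ρ : ℝ → ℝ}
    (hU : ∀ x, HasDerivAt U (ρ x) x) (hρ : ∀ x, 0 < ρ x) (hρm : Measurable ρ)
    (hU0 : ∀ x, 0 < U x) (hU1 : ∀ x, U x < 1) :
    InfConvProperty (volume.withDensity fun x => ENNReal.ofReal (ρ x)) fun x y =>
      min ((logit (U x) - logit (U y)) ^ 2) |logit (U x) - logit (U y)| / 32 := by
  intro F G N hF hG hFN hGN hFG
  exact lintegral_mul_lintegral_le_one_of_le_cosh_sq hU hρ hρm hU0 hU1 hF hG hFN hGN fun x y =>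
    (hFG x y).trans (ENNReal.ofReal_le_ofReal (exp_min_sq_abs_le_cosh_sq _))

theorem integrable_exp_neg_mul_abs_rpow {α b : ℝ} (hα : 0 < α) (hb : 0 < b) :
    Integrable fun x : ℝ => Real.exp (-b * |x| ^ α) := by
  by_contra h
  have h1 := integral_undef h
  rw [integral_comp_abs (f := fun x : ℝ => Real.exp (-b * x ^ α)),
    integral_exp_neg_mul_rpow hα hb] at h1
  have : 0 < Real.Gamma (1 / α + 1) := Real.Gamma_pos_of_pos (by positivity)
  have : 0 < b ^ (-1 / α) := by positivity
  have : 0 < 2 * (b ^ (-1 / α) * Real.Gamma (1 / α + 1)) := by positivity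
  linarith

theorem integrable_exp_neg_abs_rpow {α : ℝ} (hα : 0 < α) :
    Integrable fun x : ℝ => Real.exp (-|x| ^ α) := by
  simpa using integrable_exp_neg_mul_abs_rpow hα one_pos

theorem continuous_exp_neg_abs_rpow {α : ℝ} (hα : 0 < α) :
    Continuous fun x : ℝ => Real.exp (-|x| ^ α) :=
  Real.continuous_exp.comp (continuous_abs.rpow_const fun _ => Or.inr hα.le).neg

theorem setIntegral_exp_neg_abs_rpow_pos {α : ℝ} (hα : 0 < α) {s : Set ℝ} (hs : volume s ≠ 0) :
    0 < ∫ x in s, Real.exp (-|x| ^ α) := by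
  rw [integral_pos_iff_support_of_nonneg (fun x => (Real.exp_pos _).le)
    (integrable_exp_neg_abs_rpow hα).integrableOn]
  have : (Function.support fun x : ℝ => Real.exp (-|x| ^ α)) = Set.univ := by
    ext x; simp [Real.exp_ne_zero]
  rw [this, Measure.restrict_apply_univ]
  exact pos_iff_ne_zero.2 hs

/-- The normalized density of `ν_α`. -/
def nuDensity (α x : ℝ) : ℝ := (∫ y, Real.exp (-|y| ^ α))⁻¹ * Real.exp (-|x| ^ α)

theorem integral_exp_neg_abs_rpow_pos {α : ℝ} (hα : 0 < α) :
    0 < ∫ x, Real.exp (-|x| ^ α) := by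
  rw [← setIntegral_univ]
  exact setIntegral_exp_neg_abs_rpow_pos hα (by simp)

theorem nuDensity_pos {α : ℝ} (hα : 0 < α) (x : ℝ) : 0 < nuDensity α x :=
  mul_pos (inv_pos.2 (integral_exp_neg_abs_rpow_pos hα)) (Real.exp_pos _)

theorem continuous_nuDensity {α : ℝ} (hα : 0 < α) : Continuous (nuDensity α) :=
  (continuous_exp_neg_abs_rpow hα).const_mul _

theorem integrable_nuDensity {α : ℝ} (hα : 0 < α) : Integrable (nuDensity α) :=
  (integrable_exp_neg_abs_rpow hα).const_mul _

theorem nuKernel_univ {α : ℝ} (hα : 0 < α) :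
    nuKernel α Set.univ = ENNReal.ofReal (∫ x, Real.exp (-|x| ^ α)) := by
  rw [nuKernel, withDensity_apply _ MeasurableSet.univ, setLIntegral_univ,
    ofReal_integral_eq_lintegral_ofReal (integrable_exp_neg_abs_rpow hα)
      (ae_of_all _ fun x => (Real.exp_pos _).le)]

theorem nuAlpha_eq_withDensity {α : ℝ} (hα : 0 < α) :
    nuAlpha α = volume.withDensity fun x => ENNReal.ofReal (nuDensity α x) := by
  have hpos := integral_exp_neg_abs_rpow_pos hα
  rw [nuAlpha, nuKernel_univ hα, nuKernel, ← withDensity_smul _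
    (continuous_exp_neg_abs_rpow hα).measurable.ennreal_ofReal]
  congr 1
  ext x
  rw [Pi.smul_apply, smul_eq_mul, nuDensity, ENNReal.ofReal_mul (inv_pos.2 hpos).le,
    ENNReal.ofReal_inv_of_pos hpos]

theorem isProbabilityMeasure_nuAlpha {α : ℝ} (hα : 0 < α) : IsProbabilityMeasure (nuAlpha α) := by
  refine ⟨?_⟩
  have hpos := integral_exp_neg_abs_rpow_pos hα
  rw [nuAlpha, Measure.smul_apply, nuKernel_univ hα, smul_eq_mul]
  exact ENNReal.inv_mul_cancel (by simpa using hpos) ENNReal.ofReal_ne_top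

/-- The distribution function of `ν_α`. -/
def nuCdf (α x : ℝ) : ℝ := ∫ y in Set.Iic x, nuDensity α y

theorem one_sub_nuCdf {α : ℝ} (hα : 0 < α) (x : ℝ) :
    1 - nuCdf α x = ∫ y in Set.Ioi x, nuDensity α y := by
  have h1 : ∫ y, nuDensity α y = 1 := by
    simp only [nuDensity]
    rw [integral_const_mul, inv_mul_cancel₀ (integral_exp_neg_abs_rpow_pos hα).ne']
  rw [← h1, nuCdf, ← intervalIntegral.integral_Iic_add_Ioi (b := x)
    (integrable_nuDensity hα).integrableOn (integrable_nuDensity hα).integrableOn]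
  ring

theorem nuCdf_pos {α : ℝ} (hα : 0 < α) (x : ℝ) : 0 < nuCdf α x := by
  simp only [nuCdf, nuDensity]
  rw [integral_const_mul]
  exact mul_pos (inv_pos.2 (integral_exp_neg_abs_rpow_pos hα))
    (setIntegral_exp_neg_abs_rpow_pos hα (by simp))

theorem nuCdf_lt_one {α : ℝ} (hα : 0 < α) (x : ℝ) : nuCdf α x < 1 := by
  rw [← sub_pos, one_sub_nuCdf hα]
  simp only [nuDensity]
  rw [integral_const_mul]
  exact mul_pos (inv_pos.2 (integral_exp_neg_abs_rpow_pos hα))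
    (setIntegral_exp_neg_abs_rpow_pos hα (by simp))

theorem hasDerivAt_nuCdf {α : ℝ} (hα : 0 < α) (x : ℝ) :
    HasDerivAt (nuCdf α) (nuDensity α x) x := by
  have hi := integrable_nuDensity hα
  have h1 : HasDerivAt (fun u => ∫ y in (0 : ℝ)..u, nuDensity α y) (nuDensity α x) x :=
    (continuous_nuDensity hα).integral_hasStrictDerivAt 0 x |>.hasDerivAt
  refine (h1.const_add (nuCdf α 0)).congr_of_eventuallyEq (Eventually.of_forall fun u => ?_)
  have := intervalIntegral.integral_Iic_sub_Iic (a := 0) (b := u) hi.integrableOn hi.integrableOn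
  simp only [nuCdf]
  linarith

theorem nuCdf_neg {α : ℝ} (hα : 0 < α) (x : ℝ) : nuCdf α (-x) = 1 - nuCdf α x := by
  rw [one_sub_nuCdf hα, nuCdf, ← integral_comp_neg_Ioi x (nuDensity α)]
  simp [nuDensity]

theorem exists_setIntegral_Ioi_exp_neg_abs_rpow_le {α : ℝ} (hα0 : 0 < α) (hα1 : α < 1) :
    ∃ K > 0, ∀ z ≥ 0, ∫ y in Set.Ioi z, Real.exp (-|y| ^ α) ≤
      K * (1 + z) ^ (1 - α) * Real.exp (-|z| ^ α) := by
  set a : ℝ := (2 / α) ^ (1 / α) with ha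
  have ha1 : 1 ≤ a := Real.one_le_rpow (by rw [le_div_iff₀ hα0]; linarith) (by positivity)
  have haα : a ^ (-α) = α / 2 := by
    rw [Real.rpow_neg (by positivity), ha, ← Real.rpow_mul (by positivity),
      one_div_mul_cancel hα0.ne', Real.rpow_one, inv_div]
  set g : ℝ → ℝ := fun y => -(2 / α * ((a + y) ^ (1 - α) * Real.exp (-y ^ α))) with hg
  have hgd : ∀ y > 0, HasDerivAt g (-(2 / α * ((1 - α) * (a + y) ^ (-α) * Real.exp (-y ^ α) +
      (a + y) ^ (1 - α) * (Real.exp (-y ^ α) * -(α * y ^ (α - 1)))))) y := by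
    intro y hy
    have h1 : HasDerivAt (fun y => (a + y) ^ (1 - α)) ((1 - α) * (a + y) ^ (-α)) y := by
      have := ((hasDerivAt_id y).const_add a).rpow_const (p := 1 - α)
        (Or.inl (by simp only [id]; positivity))
      simpa using this
    have h2 : HasDerivAt (fun y : ℝ => Real.exp (-y ^ α))
        (Real.exp (-y ^ α) * -(α * y ^ (α - 1))) y :=
      (Real.hasDerivAt_rpow_const (Or.inl hy.ne')).neg.exp
    exact ((h1.mul h2).const_mul (2 / α)).neg
  have hgc : ContinuousOn g (Set.Ici 0) := by
    refine ContinuousOn.neg (ContinuousOn.mul continuousOn_const (ContinuousOn.mul ?_ ?_))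
    · exact ContinuousOn.rpow_const (by fun_prop) fun y hy => Or.inr (by linarith)
    · exact (Real.continuous_exp.comp (Real.continuous_rpow_const hα0.le).neg).continuousOn
  have hint := integrable_exp_neg_abs_rpow hα0
  have key : ∀ z ≥ 0, ∫ y in Set.Ioi z, Real.exp (-|y| ^ α) ≤ -g z := by
    intro z hz
    refine le_of_tendsto (intervalIntegral_tendsto_integral_Ioi z hint.integrableOn tendsto_id)
      ((eventually_ge_atTop z).mono fun b hb => ?_)
    refine (intervalIntegral.integral_le_sub_of_hasDeriv_right_of_le hb
      (hgc.mono fun y hy => hz.le.trans hy.1)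
      (fun y hy => (hgd y (hz.trans_lt hy.1)).hasDerivWithinAt) hint.integrableOn
      fun y hy => ?_).trans ?_
    · have hy0 : 0 < y := hz.trans_lt hy.1
      rw [abs_of_pos hy0]
      have h1 : (a + y) ^ (-α) ≤ α / 2 := by
        rw [← haα]
        exact Real.rpow_le_rpow_of_nonpos (by positivity) (by linarith) (by linarith)
      have h2 : 1 ≤ (a + y) ^ (1 - α) * y ^ (α - 1) := by
        rw [show α - 1 = -(1 - α) by ring, Real.rpow_neg hy0.le, ← div_eq_mul_inv,
          one_le_div (by positivity)]
        exact Real.rpow_le_rpow hy0.le (by linarith) (by linarith)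
      have h3 : 0 < (a + y) ^ (-α) := by positivity
      have h4 : α / 2 ≤ α * ((a + y) ^ (1 - α) * y ^ (α - 1)) - (1 - α) * (a + y) ^ (-α) := by
        nlinarith
      calc Real.exp (-y ^ α) = 2 / α * (α / 2 * Real.exp (-y ^ α)) := by field_simp
        _ ≤ 2 / α * ((α * ((a + y) ^ (1 - α) * y ^ (α - 1)) - (1 - α) * (a + y) ^ (-α)) *
            Real.exp (-y ^ α)) := by gcongr
        _ = _ := by ring
    · have : g b ≤ 0 := by
        have : 0 ≤ b := hz.le.trans hb
        simp only [hg, Left.neg_nonpos_iff]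
        positivity
      linarith
  refine ⟨2 / α * a ^ (1 - α), by positivity, fun z hz => (key z hz).trans ?_⟩
  simp only [hg, neg_neg, abs_of_nonneg hz]
  rw [mul_assoc (2 / α), ← Real.mul_rpow (by positivity) (by linarith), mul_assoc]
  gcongr
  nlinarith

theorem exists_le_nuDensity_div {α : ℝ} (hα0 : 0 < α) (hα1 : α < 1) :
    ∃ κ > 0, ∀ z, κ * (1 + |z|) ^ (α - 1) ≤ nuDensity α z / (nuCdf α z * (1 - nuCdf α z)) := by
  obtain ⟨K, hK, hKz⟩ := exists_setIntegral_Ioi_exp_neg_abs_rpow_le hα0 hα1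
  have main : ∀ z ≥ 0, K⁻¹ * (1 + |z|) ^ (α - 1) ≤
      nuDensity α z / (nuCdf α z * (1 - nuCdf α z)) := by
    intro z hz
    have hY := integral_exp_neg_abs_rpow_pos hα0
    have h0 := nuCdf_pos hα0 z
    have h1 := sub_pos.2 (nuCdf_lt_one hα0 z)
    have htail : 1 - nuCdf α z ≤ K * (1 + z) ^ (1 - α) * nuDensity α z := by
      rw [one_sub_nuCdf hα0]
      simp only [nuDensity]
      rw [integral_const_mul]
      calc _ ≤ _ := mul_le_mul_of_nonneg_left (hKz z hz) (inv_pos.2 hY).le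
        _ = _ := by ring
    have hrp : (1 + z) ^ (α - 1) * (1 + z) ^ (1 - α) = 1 := by
      rw [← Real.rpow_add (by linarith)]
      simp
    rw [le_div_iff₀ (mul_pos h0 h1), abs_of_nonneg hz]
    have hp : 0 ≤ (1 + z) ^ (α - 1) := by positivity
    calc K⁻¹ * (1 + z) ^ (α - 1) * (nuCdf α z * (1 - nuCdf α z))
        ≤ K⁻¹ * (1 + z) ^ (α - 1) * (1 * (K * (1 + z) ^ (1 - α) * nuDensity α z)) := by
          gcongr
          exact (nuCdf_lt_one hα0 z).le
      _ = (K⁻¹ * K) * ((1 + z) ^ (α - 1) * (1 + z) ^ (1 - α)) * nuDensity α z := by ring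
      _ = nuDensity α z := by rw [hrp, inv_mul_cancel₀ hK.ne']; ring
  refine ⟨K⁻¹, inv_pos.2 hK, fun z => ?_⟩
  rcases le_total 0 z with hz | hz
  · exact main z hz
  · have h := main (-z) (by linarith)
    rw [nuCdf_neg hα0, abs_neg, show nuDensity α (-z) = nuDensity α z by simp [nuDensity]] at h
    rwa [mul_comm (nuCdf α z), show nuCdf α z = 1 - (1 - nuCdf α z) by ring,
      show 1 - (1 - (1 - nuCdf α z)) = 1 - nuCdf α z by ring]

theorem exists_mul_le_abs_logit_nuCdf_sub {α : ℝ} (hα0 : 0 < α) (hα1 : α < 1) :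
    ∃ κ > 0, ∀ x y, κ * |x - y| * (1 + max |x| |y|) ^ (α - 1) ≤
      |logit (nuCdf α x) - logit (nuCdf α y)| := by
  obtain ⟨κ, hκ, h⟩ := exists_le_nuDensity_div hα0 hα1
  refine ⟨κ, hκ, fun x y => ?_⟩
  wlog hxy : y < x generalizing x y
  · rcases (not_lt.1 hxy).eq_or_lt with rfl | hlt
    · simp
    · rw [abs_sub_comm x, abs_sub_comm (logit _), max_comm]
      exact this y x hlt
  have hd : ∀ z, HasDerivAt (fun z => logit (nuCdf α z))
      (nuDensity α z / (nuCdf α z * (1 - nuCdf α z))) z := by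
    intro z
    have h0 := nuCdf_pos hα0 z
    have h1 := sub_pos.2 (nuCdf_lt_one hα0 z)
    have hU := hasDerivAt_nuCdf hα0 z
    refine ((hU.log h0.ne').sub ((hU.const_sub 1).log h1.ne')).congr_deriv ?_
    field_simp
    ring
  obtain ⟨z, hz, hslope⟩ := exists_hasDerivAt_eq_slope (fun z => logit (nuCdf α z)) _ hxy
    (fun z _ => (hd z).continuousAt.continuousWithinAt) (fun z _ => hd z)
  have hzmax : |z| ≤ max |x| |y| :=
    abs_le.2 ⟨by linarith [neg_abs_le y, le_max_right |x| |y|, hz.1],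
      by linarith [le_abs_self x, le_max_left |x| |y|, hz.2]⟩
  have hpos : 0 < x - y := sub_pos.2 hxy
  rw [eq_div_iff hpos.ne'] at hslope
  rw [← hslope, abs_of_pos hpos]
  refine le_trans ?_ (le_abs_self _)
  have h2 : (1 + max |x| |y|) ^ (α - 1) ≤ (1 + |z|) ^ (α - 1) :=
    Real.rpow_le_rpow_of_nonpos (by positivity) (by linarith) (by linarith)
  calc κ * (x - y) * (1 + max |x| |y|) ^ (α - 1) ≤ κ * (x - y) * (1 + |z|) ^ (α - 1) := by gcongr
    _ = κ * (1 + |z|) ^ (α - 1) * (x - y) := by ring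
    _ ≤ _ := by gcongr; exact h z

theorem infConvProperty_nuAlpha {α : ℝ} (hα0 : 0 < α) :
    InfConvProperty (nuAlpha α) fun x y =>
      min ((logit (nuCdf α x) - logit (nuCdf α y)) ^ 2)
        |logit (nuCdf α x) - logit (nuCdf α y)| / 32 := by
  rw [nuAlpha_eq_withDensity hα0]
  exact infConvProperty_withDensity (hasDerivAt_nuCdf hα0) (nuDensity_pos hα0)
    (continuous_nuDensity hα0).measurable (nuCdf_pos hα0) (nuCdf_lt_one hα0)

theorem exists_nuAlpha_abs_gt_le {α : ℝ} (hα0 : 0 < α) :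
    ∃ K ≥ 1, ∀ M ≥ 0, nuAlpha α {x | M < |x|} ≤ ENNReal.ofReal (K * Real.exp (-M ^ α / 2)) := by
  set Z : ℝ := (∫ y, Real.exp (-|y| ^ α))⁻¹ * ∫ x, Real.exp (-(1 / 2) * |x| ^ α) with hZ
  have hY := integral_exp_neg_abs_rpow_pos hα0
  have hi := integrable_exp_neg_mul_abs_rpow hα0 one_half_pos
  refine ⟨max 1 Z, le_max_left _ _, fun M hM => ?_⟩
  have hms : MeasurableSet {x : ℝ | M < |x|} := measurableSet_lt measurable_const (by fun_prop)
  rw [nuAlpha_eq_withDensity hα0, withDensity_apply _ hms]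
  calc ∫⁻ x in {x | M < |x|}, ENNReal.ofReal (nuDensity α x)
      ≤ ∫⁻ x in {x | M < |x|}, ENNReal.ofReal (Real.exp (-M ^ α / 2) *
          ((∫ y, Real.exp (-|y| ^ α))⁻¹ * Real.exp (-(1 / 2) * |x| ^ α))) := by
        refine setLIntegral_mono' hms fun x (hx : M < |x|) => ENNReal.ofReal_le_ofReal ?_
        have h1 : M ^ α ≤ |x| ^ α := Real.rpow_le_rpow hM hx.le hα0.le
        rw [nuDensity, mul_left_comm, ← Real.exp_add]
        gcongr
        linarith
    _ ≤ ∫⁻ x, ENNReal.ofReal (Real.exp (-M ^ α / 2) *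
          ((∫ y, Real.exp (-|y| ^ α))⁻¹ * Real.exp (-(1 / 2) * |x| ^ α))) :=
        setLIntegral_le_lintegral _ _
    _ = ENNReal.ofReal (Real.exp (-M ^ α / 2) * Z) := by
        rw [← ofReal_integral_eq_lintegral_ofReal ((hi.const_mul _).const_mul _)
          (ae_of_all _ fun x => by positivity), integral_const_mul, integral_const_mul]
    _ ≤ _ := by
        rw [mul_comm]
        gcongr
        exact le_max_right _ _

theorem mem_smul_lpBall {p t : ℝ} (hp : 0 < p) (ht : 0 < t) {n : ℕ} {h : Fin n → ℝ}
    (hh : ∑ i, |h i| ^ p ≤ t ^ p) : h ∈ t • lpBall p n := by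
  rw [Set.mem_smul_set_iff_inv_smul_mem₀ ht.ne']
  refine Real.rpow_le_one (Finset.sum_nonneg fun i _ => by positivity) ?_ (by positivity)
  have : ∀ i, |(t⁻¹ • h) i| ^ p = (t ^ p)⁻¹ * |h i| ^ p := by
    intro i
    rw [Pi.smul_apply, smul_eq_mul, abs_mul, abs_of_pos (inv_pos.2 ht),
      Real.mul_rpow (by positivity) (abs_nonneg _), Real.inv_rpow ht.le]
  simp_rw [this]
  rw [← Finset.mul_sum, inv_mul_le_one₀ (by positivity)]
  exact hh

theorem isCompact_lpBall {p : ℝ} (hp : 0 < p) (n : ℕ) : IsCompact (lpBall p n) := by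
  have hcont : Continuous fun h : Fin n → ℝ => lpNorm p h :=
    Continuous.rpow_const (continuous_finsetSum _ fun i _ =>
      ((continuous_apply i).abs.rpow_const fun _ => Or.inr hp.le)) fun _ => Or.inr (by positivity)
  refine (isCompact_Icc (a := (-1 : Fin n → ℝ)) (b := 1)).of_isClosed_subset
    (isClosed_le hcont continuous_const) fun h hh => ?_
  have hsum : ∑ i, |h i| ^ p ≤ 1 := by
    have h0 : 0 ≤ ∑ i, |h i| ^ p := Finset.sum_nonneg fun i _ => by positivity
    by_contra hlt
    exact absurd (show lpNorm p h ≤ 1 from hh)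
      (not_le.2 (Real.one_lt_rpow (not_le.1 hlt) (by positivity)))
  have habs : ∀ i, |h i| ≤ 1 := by
    intro i
    have h1 : |h i| ^ p ≤ 1 := (Finset.single_le_sum (f := fun i => |h i| ^ p)
      (fun j _ => by positivity) (Finset.mem_univ i)).trans hsum
    by_contra hlt
    exact absurd h1 (not_le.2 (Real.one_lt_rpow (not_le.1 hlt) hp))
  exact ⟨fun i => (abs_le.1 (habs i)).1, fun i => (abs_le.1 (habs i)).2⟩

/-- A vector whose small coordinates are controlled by `L * D` and whose large coordinates are
controlled by `D ^ (1 / α)` splits according to the three balls. -/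
theorem mem_three_lpBalls {α K L r T : ℝ} (hα0 : 0 < α) (hK : 1 ≤ K) (hL : 0 < L) (hr : 0 < r)
    {n : ℕ} {h D : Fin n → ℝ} (hD : ∀ i, 0 ≤ D i) (hsmall : ∀ i, |h i| ≤ T → |h i| ≤ K * L * D i)
    (hlarge : ∀ i, T < |h i| → |h i| ^ α ≤ K * D i ∧ 1 ≤ K * D i)
    (hsum : K ^ 2 * ∑ i, min (D i ^ 2) (D i) ≤ r) :
    h ∈ L • (Real.sqrt r • lpBall 2 n + r • lpBall 1 n) + r ^ (1 / α) • lpBall α n := by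
  set hα : Fin n → ℝ := fun i => if |h i| ≤ T then 0 else h i with hhα
  set h2 : Fin n → ℝ := fun i => if |h i| ≤ T ∧ D i ≤ 1 then L⁻¹ * h i else 0 with hh2
  set h1 : Fin n → ℝ := fun i => if |h i| ≤ T ∧ 1 < D i then L⁻¹ * h i else 0 with hh1
  have hm : ∀ i, 0 ≤ min (D i ^ 2) (D i) := fun i => le_min (sq_nonneg _) (hD i)
  have hsum' : ∑ i, K ^ 2 * min (D i ^ 2) (D i) ≤ r := by rwa [← Finset.mul_sum]
  have hL' : ∀ i, |h i| ≤ T → |L⁻¹ * h i| ≤ K * D i := by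
    intro i hi
    rw [abs_mul, abs_of_pos (inv_pos.2 hL), inv_mul_le_iff₀ hL]
    linarith [hsmall i hi]
  have hmem2 : h2 ∈ Real.sqrt r • lpBall 2 n := by
    refine mem_smul_lpBall two_pos (Real.sqrt_pos.2 hr) ?_
    rw [Real.rpow_two, Real.sq_sqrt hr.le]
    refine (Finset.sum_le_sum fun i _ => ?_).trans hsum'
    simp only [hh2]
    split_ifs with hi
    · rw [Real.rpow_two, min_eq_left (by nlinarith [hD i]), ← mul_pow]
      exact pow_le_pow_left₀ (abs_nonneg _) (hL' i hi.1) 2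
    · have := hm i
      rw [abs_zero, Real.zero_rpow two_ne_zero]
      positivity
  have hmem1 : h1 ∈ r • lpBall 1 n := by
    refine mem_smul_lpBall one_pos hr ?_
    rw [Real.rpow_one]
    refine (Finset.sum_le_sum fun i _ => ?_).trans hsum'
    simp only [hh1]
    split_ifs with hi
    · rw [Real.rpow_one, min_eq_right (by nlinarith [hD i])]
      have hKK : K ≤ K ^ 2 := by nlinarith
      exact (hL' i hi.1).trans (mul_le_mul_of_nonneg_right hKK (hD i))
    · have := hm i
      simp only [abs_zero, Real.rpow_one]
      positivity
  have hmemα : hα ∈ r ^ (1 / α) • lpBall α n := by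
    refine mem_smul_lpBall hα0 (by positivity) ?_
    rw [← Real.rpow_mul hr.le, one_div_mul_cancel hα0.ne', Real.rpow_one]
    refine (Finset.sum_le_sum fun i _ => ?_).trans hsum'
    simp only [hhα]
    split_ifs with hi
    · have := hm i
      rw [abs_zero, Real.zero_rpow hα0.ne']
      positivity
    · obtain ⟨h3, h4⟩ := hlarge i (not_le.1 hi)
      refine h3.trans ?_
      rw [mul_min_of_nonneg _ _ (by positivity)]
      refine le_min ?_ ?_ <;> nlinarith [hD i]
  refine ⟨L • (h2 + h1), Set.smul_mem_smul_set ⟨h2, hmem2, h1, hmem1, rfl⟩, hα, hmemα, ?_⟩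
  funext i
  simp only [Pi.add_apply, Pi.smul_apply, smul_eq_mul, hh2, hh1, hhα]
  by_cases hi : |h i| ≤ T
  · rcases le_or_gt (D i) 1 with hd | hd
    · simp [hi, hd, hd.not_gt, hL.ne']
    · simp [hi, hd, hd.not_ge, hL.ne']
  · simp [hi]

theorem abs_sub_bounds {α κ M D x y : ℝ} (hα0 : 0 < α) (hα1 : α < 1) (hκ : 0 < κ) (hM : 1 ≤ M)
    (hy : |y| ≤ M) (hD : κ * |x - y| * (1 + max |x| |y|) ^ (α - 1) ≤ D) :
    (|x - y| ≤ 2 * M → |x - y| ≤ 4 * κ⁻¹ * M ^ (1 - α) * D) ∧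
      (2 * M < |x - y| → |x - y| ^ α ≤ 2 * κ⁻¹ * D ∧ 1 ≤ 2 * κ⁻¹ * D) := by
  have hx : |x| ≤ |x - y| + M := by
    have := abs_add_le (x - y) y
    rw [sub_add_cancel] at this
    linarith
  have hmul : ∀ B > 0, 1 + max |x| |y| ≤ B → κ * |x - y| * B ^ (α - 1) ≤ D := by
    intro B hB hle
    refine le_trans ?_ hD
    have : B ^ (α - 1) ≤ (1 + max |x| |y|) ^ (α - 1) :=
      Real.rpow_le_rpow_of_nonpos (by positivity) hle (by linarith)
    gcongr
  refine ⟨fun h => ?_, fun h => ?_⟩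
  · have h1 := hmul (4 * M) (by linarith) (by
      have : max |x| |y| ≤ 3 * M := max_le (by linarith) (by linarith)
      linarith)
    have hB : (4 * M) ^ (α - 1) * (4 * M) ^ (1 - α) = 1 := by
      rw [← Real.rpow_add (by linarith)]; simp
    have h4 : (4 * M) ^ (1 - α) ≤ 4 * M ^ (1 - α) := by
      rw [Real.mul_rpow (by norm_num) (by linarith)]
      gcongr
      exact (Real.rpow_le_rpow_of_exponent_le (by norm_num) (by linarith : 1 - α ≤ 1)).trans_eq
        (Real.rpow_one 4)
    have hD0 : 0 ≤ D := le_trans (by positivity) hD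
    calc |x - y| = κ⁻¹ * (4 * M) ^ (1 - α) * (κ * |x - y| * (4 * M) ^ (α - 1)) := by
          rw [show κ⁻¹ * (4 * M) ^ (1 - α) * (κ * |x - y| * (4 * M) ^ (α - 1)) =
            (κ⁻¹ * κ) * |x - y| * ((4 * M) ^ (α - 1) * (4 * M) ^ (1 - α)) by ring, hB,
            inv_mul_cancel₀ hκ.ne']
          ring
      _ ≤ κ⁻¹ * (4 * M ^ (1 - α)) * D := by gcongr
      _ = _ := by ring
  · have hpos : 0 < |x - y| := by linarith
    have h1 := hmul (2 * |x - y|) (by linarith) (by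
      have : max |x| |y| ≤ |x - y| + M := max_le hx (by linarith)
      linarith)
    have h2 : (1 / 2 : ℝ) ≤ 2 ^ (α - 1) := by
      rw [one_div, ← Real.rpow_neg_one]
      exact Real.rpow_le_rpow_of_exponent_le (by norm_num) (by linarith)
    have h3 : |x - y| * |x - y| ^ (α - 1) = |x - y| ^ α := by
      rw [← Real.rpow_one_add' hpos.le (by linarith)]
      congr 1; ring
    have h5 : |x - y| ^ α ≤ 2 * κ⁻¹ * D := by
      calc |x - y| ^ α = 2 * κ⁻¹ * (κ * (1 / 2 * |x - y| ^ α)) := by field_simp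
        _ ≤ 2 * κ⁻¹ * (κ * (2 ^ (α - 1) * |x - y| ^ α)) := by gcongr
        _ = 2 * κ⁻¹ * (κ * |x - y| * (2 * |x - y|) ^ (α - 1)) := by
          rw [Real.mul_rpow (by norm_num) hpos.le, ← h3]; ring
        _ ≤ _ := by gcongr
    exact ⟨h5, (Real.one_le_rpow (by linarith) hα0.le).trans h5⟩

theorem exists_rpow_log_le {K p : ℝ} (hK : 1 ≤ K) (hp : 0 < p) :
    ∃ B > 0, ∀ n : ℕ, 2 ≤ n → ∀ C ≥ (1 : ℝ),
      (2 * Real.log (K * n * C)) ^ p ≤ B * (C * Real.log n ^ p) := by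
  have hl2 : 0 < Real.log 2 := Real.log_pos (by norm_num)
  have hlK : 0 ≤ Real.log K := Real.log_nonneg hK
  set b : ℝ := 2 * (Real.log K / Real.log 2 + 1 + p / Real.log 2) with hb
  have hb0 : 0 < b := by positivity
  refine ⟨b ^ p, by positivity, fun n hn C hC => ?_⟩
  have hn' : (2 : ℝ) ≤ n := by exact_mod_cast hn
  have hln : Real.log 2 ≤ Real.log n := Real.log_le_log two_pos hn'
  have hC1 : 1 ≤ C ^ (1 / p) := Real.one_le_rpow hC (by positivity)
  have hlC : Real.log C ≤ p * C ^ (1 / p) := by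
    have := Real.log_le_rpow_div (x := C) (by linarith) (ε := 1 / p) (by positivity)
    rwa [div_div_eq_mul_div, div_one, mul_comm] at this
  have hbase : 2 * Real.log (K * n * C) ≤ b * (C ^ (1 / p) * Real.log n) := by
    rw [Real.log_mul (by positivity) (by positivity), Real.log_mul (by positivity) (by positivity)]
    have hprod : Real.log 2 ≤ C ^ (1 / p) * Real.log n := by nlinarith
    have e1 : Real.log K ≤ Real.log K / Real.log 2 * (C ^ (1 / p) * Real.log n) := by
      rw [div_mul_eq_mul_div, le_div_iff₀ hl2]; gcongr
    have e2 : Real.log n ≤ C ^ (1 / p) * Real.log n := by nlinarith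
    have e3 : Real.log C ≤ p / Real.log 2 * (C ^ (1 / p) * Real.log n) := by
      refine hlC.trans ?_
      rw [div_mul_eq_mul_div, le_div_iff₀ hl2, mul_assoc]; gcongr
    rw [hb]
    linarith
  have h0 : 0 ≤ 2 * Real.log (K * n * C) :=
    mul_nonneg two_pos.le (Real.log_nonneg (by
      have : 1 ≤ K * n := by nlinarith
      nlinarith))
  have hC0 : 0 ≤ C ^ (1 / p) := by linarith
  calc (2 * Real.log (K * n * C)) ^ p ≤ (b * (C ^ (1 / p) * Real.log n)) ^ p :=
        Real.rpow_le_rpow h0 hbase hp.le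
    _ = b ^ p * (C * Real.log n ^ p) := by
        rw [Real.mul_rpow hb0.le (by positivity), Real.mul_rpow hC0 (by positivity),
          ← Real.rpow_mul (by linarith), one_div_mul_cancel hp.ne', Real.rpow_one]

theorem nuPi_exists_abs_gt_le {α K M ε : ℝ} (hα0 : 0 < α) {n : ℕ}
    (hK : nuAlpha α {x | M < |x|} ≤ ENNReal.ofReal K) (hn : n * K ≤ ε) :
    nuPi α n {x | ∀ i, |x i| ≤ M}ᶜ ≤ ENNReal.ofReal ε := by
  have := isProbabilityMeasure_nuAlpha hα0
  have hsub : {x : Fin n → ℝ | ∀ i, |x i| ≤ M}ᶜ ⊆ ⋃ i, Function.eval i ⁻¹' {x | M < |x|} := by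
    intro x hx
    simpa using hx
  have hms : MeasurableSet {x : ℝ | M < |x|} := measurableSet_lt measurable_const (by fun_prop)
  calc nuPi α n {x | ∀ i, |x i| ≤ M}ᶜ
      ≤ ∑ i : Fin n, nuPi α n (Function.eval i ⁻¹' {x | M < |x|}) :=
        (measure_mono hsub).trans (measure_iUnion_fintype_le _ _)
    _ = ∑ i : Fin n, nuAlpha α {x | M < |x|} := by
        refine Finset.sum_congr rfl fun i _ => ?_
        exact (measurePreserving_eval (fun _ : Fin n => nuAlpha α) i).measure_preimage
          hms.nullMeasurableSet
    _ ≤ ∑ i : Fin n, ENNReal.ofReal K := Finset.sum_le_sum fun _ _ => hK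
    _ = ENNReal.ofReal (n * K) := by
        rw [ENNReal.ofReal_mul (by positivity)]
        simp
    _ ≤ _ := ENNReal.ofReal_le_ofReal hn

/-- Under property `τ`, two sets at cost at least `s` have small product of measures. -/
theorem InfConvProperty.measure_mul_measure_le {X : Type*} [MeasurableSpace X] {μ : Measure X}
    {w : X → X → ℝ} (hμ : InfConvProperty μ w) {A E : Set X} (hA : MeasurableSet A)
    (hE : MeasurableSet E) {s : ℝ} (h : ∀ y ∈ A, ∀ x ∈ E, s ≤ w x y) :
    μ A * μ E ≤ ENNReal.ofReal (Real.exp (-s)) := by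
  have hpos := Real.exp_pos s
  have key := hμ (E.indicator fun _ => ENNReal.ofReal (Real.exp s)) (A.indicator fun _ => 1)
    (max (Real.exp s).toNNReal 1) (measurable_const.indicator hE) (measurable_const.indicator hA)
    (fun x => by
      refine (Set.indicator_le_self' (fun _ _ => zero_le) x).trans ?_
      exact ENNReal.coe_le_coe.2 (le_max_left _ _))
    (fun x => by
      refine (Set.indicator_le_self' (fun _ _ => zero_le) x).trans ?_
      exact ENNReal.one_le_coe_iff.2 (le_max_right _ _))
    (fun x y => by
      by_cases hx : x ∈ E
      · by_cases hy : y ∈ A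
        · simpa [hx, hy] using ENNReal.ofReal_le_ofReal (Real.exp_le_exp.2 (h y hy x hx))
        · simp [hy]
      · simp [hx])
  rw [lintegral_indicator_const hE, lintegral_indicator_const hA, one_mul, mul_assoc] at key
  rw [Real.exp_neg, ENNReal.ofReal_inv_of_pos hpos, mul_comm]
  have he0 : ENNReal.ofReal (Real.exp s) ≠ 0 := by simpa using hpos
  rw [← ENNReal.mul_le_mul_iff_right he0 ENNReal.ofReal_ne_top]
  rwa [ENNReal.mul_inv_cancel he0 ENNReal.ofReal_ne_top]

/-- Proposition (two-level deviation inequality for `ν_α^n`, `α ∈ (0,1)`). -/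
theorem deviation_inequality_nuAlpha (α : ℝ) (hα0 : 0 < α) (hα1 : α < 1) :
    ∃ c > (0 : ℝ), ∀ n : ℕ, 2 ≤ n → ∀ r > (0 : ℝ), ∀ A : Set (Fin n → ℝ),
      MeasurableSet A → ∀ C > (0 : ℝ), 1 / C < (nuPi α n A).toReal →
        (nuPi α n
          (A + (C * Real.log n ^ (1/α - 1)) •
              (Real.sqrt r • lpBall 2 n + r • lpBall 1 n) +
            r ^ (1/α) • lpBall α n)ᶜ).toReal ≤
          Real.exp (-c * r) / ((nuPi α n A).toReal - 1 / C) := by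
  have hprob := isProbabilityMeasure_nuAlpha hα0
  have hp : 0 < 1 / α - 1 := sub_pos.2 ((one_lt_div hα0).2 hα1)
  obtain ⟨κ, hκ, hlogit⟩ := exists_mul_le_abs_logit_nuCdf_sub hα0 hα1
  obtain ⟨K₁, hK₁, htail⟩ := exists_nuAlpha_abs_gt_le hα0
  obtain ⟨B, hB, hBlog⟩ := exists_rpow_log_le hK₁ hp
  set K : ℝ := max 1 (max (4 * κ⁻¹ * B) (2 * κ⁻¹)) with hKdef
  have hK1 : 1 ≤ K := le_max_left _ _
  have hKB : 4 * κ⁻¹ * B ≤ K := (le_max_left _ _).trans (le_max_right _ _)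
  have hKκ : 2 * κ⁻¹ ≤ K := (le_max_right _ _).trans (le_max_right _ _)
  refine ⟨1 / (32 * K ^ 2), by positivity, fun n hn r hr A hA C hC hCA => ?_⟩
  set c : ℝ := 1 / (32 * K ^ 2) with hc
  have hprobn : IsProbabilityMeasure (nuPi α n) := by unfold nuPi; infer_instance
  have hn' : (2 : ℝ) ≤ n := by exact_mod_cast hn
  have hC1 : 1 ≤ C := by
    have h1 : (nuPi α n A).toReal ≤ 1 := measureReal_le_one
    exact ((div_lt_one hC).1 (hCA.trans_le h1)).le
  set L : ℝ := C * Real.log n ^ (1 / α - 1) with hLdef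
  have hL : 0 < L := mul_pos hC (Real.rpow_pos_of_pos (Real.log_pos (by linarith)) _)
  set ℓ : ℝ := 2 * Real.log (K₁ * n * C) with hℓ
  have hℓ1 : 1 ≤ ℓ := by
    have h1 : Real.log 2 ≤ Real.log (K₁ * n * C) := by
      refine Real.log_le_log two_pos ?_
      have : 2 ≤ K₁ * n := by nlinarith
      nlinarith
    linarith [Real.log_two_gt_d9]
  set M : ℝ := ℓ ^ (1 / α) with hMdef
  have hM1 : 1 ≤ M := Real.one_le_rpow hℓ1 (by positivity)
  have hMα : M ^ α = ℓ := by
    rw [hMdef, ← Real.rpow_mul (by linarith), one_div_mul_cancel hα0.ne', Real.rpow_one]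
  have hML : M ^ (1 - α) ≤ B * L := by
    rw [hMdef, ← Real.rpow_mul (by linarith), show 1 / α * (1 - α) = 1 / α - 1 by field_simp]
    exact hBlog n hn C hC1
  set box : Set (Fin n → ℝ) := {x | ∀ i, |x i| ≤ M} with hbox
  have hboxm : MeasurableSet box := by
    rw [hbox, Set.ofPred_forall]
    exact MeasurableSet.iInter fun i => measurableSet_le (by fun_prop) measurable_const
  have hboxc : nuPi α n boxᶜ ≤ ENNReal.ofReal (1 / C) := by
    refine nuPi_exists_abs_gt_le hα0 (htail M (by linarith)) (le_of_eq ?_)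
    rw [hMα, hℓ, neg_div, mul_div_cancel_left₀ _ two_ne_zero, Real.exp_neg,
      Real.exp_log (by positivity)]
    field_simp
  set V : Set (Fin n → ℝ) := L • (Real.sqrt r • lpBall 2 n + r • lpBall 1 n) +
    r ^ (1 / α) • lpBall α n with hV
  have hVc : IsCompact V := (((isCompact_lpBall two_pos n).smul _).add
    ((isCompact_lpBall one_pos n).smul _)).smul L |>.add ((isCompact_lpBall hα0 n).smul _)
  have hcompact : ∀ S ⊆ A ∩ box, IsCompact S →
      nuPi α n S * nuPi α n (A + V)ᶜ ≤ ENNReal.ofReal (Real.exp (-(c * r))) := by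
    intro S hS hSc
    refine (mul_le_mul_right (measure_mono (Set.compl_subset_compl.2
      (Set.add_subset_add_right (hS.trans Set.inter_subset_left)))) _).trans ?_
    refine ((infConvProperty_nuAlpha hα0).pi n).measure_mul_measure_le hSc.measurableSet
      (hSc.add hVc).measurableSet.compl fun y hy x hx => ?_
    by_contra hlt
    refine hx ⟨y, hy, x - y, ?_, add_sub_cancel _ _⟩
    have hco := fun i => abs_sub_bounds hα0 hα1 hκ hM1 ((hS hy).2 i) (hlogit (x i) (y i))
    refine mem_three_lpBalls (D := fun i => |logit (nuCdf α (x i)) - logit (nuCdf α (y i))|)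
      (T := 2 * M) hα0 hK1 hL hr (fun i => abs_nonneg _) (fun i hi => ?_) (fun i hi => ?_) ?_
    · refine ((hco i).1 hi).trans ?_
      refine mul_le_mul_of_nonneg_right ?_ (abs_nonneg _)
      calc 4 * κ⁻¹ * M ^ (1 - α) ≤ 4 * κ⁻¹ * (B * L) := by gcongr
        _ = 4 * κ⁻¹ * B * L := by ring
        _ ≤ K * L := by gcongr
    · obtain ⟨h1, h2⟩ := (hco i).2 hi
      have h3 := mul_le_mul_of_nonneg_right hKκ
        (abs_nonneg (logit (nuCdf α (x i)) - logit (nuCdf α (y i))))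
      exact ⟨h1.trans h3, h2.trans h3⟩
    · simp only [sq_abs]
      rw [not_le, ← Finset.sum_div, hc, div_mul_eq_mul_div, one_mul, div_lt_div_iff₀ (by norm_num)
        (by positivity)] at hlt
      nlinarith
  have hmul : nuPi α n (A ∩ box) * nuPi α n (A + V)ᶜ ≤ ENNReal.ofReal (Real.exp (-(c * r))) := by
    rw [(hA.inter hboxm).measure_eq_iSup_isCompact]
    simp_rw [ENNReal.iSup_mul]
    exact iSup_le fun S => iSup_le fun hS => iSup_le fun hSc => hcompact S hS hSc
  have hreal : (nuPi α n (A ∩ box)).toReal * (nuPi α n (A + V)ᶜ).toReal ≤ Real.exp (-(c * r)) := by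
    rw [← ENNReal.toReal_mul]
    exact ENNReal.toReal_le_of_le_ofReal (Real.exp_pos _).le hmul
  have hAbox : (nuPi α n A).toReal - 1 / C ≤ (nuPi α n (A ∩ box)).toReal := by
    have h1 : nuPi α n A ≤ nuPi α n (A ∩ box) + nuPi α n boxᶜ := by
      refine (measure_mono fun x hx => ?_).trans (measure_union_le _ _)
      by_cases hb : x ∈ box
      · exact Or.inl ⟨hx, hb⟩
      · exact Or.inr hb
    have h2 := ENNReal.toReal_mono (by finiteness) h1
    rw [ENNReal.toReal_add (by finiteness) (by finiteness)] at h2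
    have h3 := ENNReal.toReal_le_of_le_ofReal (by positivity) hboxc
    linarith
  rw [add_assoc, ← hV, le_div_iff₀ (sub_pos.2 hCA), neg_mul, mul_comm]
  exact (mul_le_mul_of_nonneg_right hAbox ENNReal.toReal_nonneg).trans hreal

end
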